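/- arXiv:2201.01402 — 2 statements merged into one kernel-verified Lean document; each statement's English description precedes it below -/
import Mathlib

section
/- Shuffle decomposition in depth: ζ_{(r,1),1}((1,𝐤;2),(2)) · ζ(2) = 2ζ_{(r,1),2}((1,𝐤;2),(2,2)) + 4ζ_{(r,1),2}((1,𝐤;2),(1,3)) + 2ζ_{(r,1),2}((2,𝐤;2),(1,2)) + 4ζ_{(r,1),2}((1,𝐤;3),(1,2)) + ζ_{(r,1),2}((2,𝐤;2),(2,1)) + 2ζ_{(r,1),2}((1,𝐤;3),(2,1)) + 2ζ_{(r,1,1),1}((1,𝐤;2;2),(2)) + 4ζ_{(r,1,1),1}((1,𝐤;1;3),(2)). -/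
/-- Product `∏_j b_j^{-k_j}` over the row entries `b₂ ≤ ⋯ ≤ b_r`. -/
noncomputable def rowProd {n : ℕ} (k : Fin n → ℕ) (b : Fin n → ℕ) : ℝ :=
  (∏ j, ((b j : ℝ)) ^ (k j))⁻¹

/-- `ζ_{(r,1),1}((u,𝐤;v),(t))`. -/
noncomputable def ef1 {n : ℕ} (k : Fin n → ℕ) (u v t : ℕ) : ℝ :=
  ∑' x : {x : (ℕ × ℕ × ℕ) × (Fin n → ℕ) //
      0 < x.1.1 ∧ 0 < x.1.2.1 ∧ x.1.2.1 < x.1.2.2 ∧ Monotone x.2 ∧ ∀ j, x.1.2.1 ≤ x.2 j},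
    ((x.1.1.1 : ℝ) ^ t * ((x.1.1.1 + x.1.1.2.1 : ℕ) : ℝ) ^ u
        * ((x.1.1.1 + x.1.1.2.2 : ℕ) : ℝ) ^ v)⁻¹ * rowProd k x.1.2

/-- `ζ_{(r,1),2}((u,𝐤;v),(t₁,t₂))`. -/
noncomputable def ef2 {n : ℕ} (k : Fin n → ℕ) (u v t₁ t₂ : ℕ) : ℝ :=
  ∑' x : {x : (ℕ × ℕ × ℕ × ℕ) × (Fin n → ℕ) //
      0 < x.1.1 ∧ x.1.1 < x.1.2.1 ∧ 0 < x.1.2.2.1 ∧ x.1.2.2.1 < x.1.2.2.2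
        ∧ Monotone x.2 ∧ ∀ j, x.1.2.2.1 ≤ x.2 j},
    ((x.1.1.1 : ℝ) ^ t₁ * (x.1.1.2.1 : ℝ) ^ t₂ * ((x.1.1.2.1 + x.1.1.2.2.1 : ℕ) : ℝ) ^ u
        * ((x.1.1.2.1 + x.1.1.2.2.2 : ℕ) : ℝ) ^ v)⁻¹ * rowProd k x.1.2

/-- `ζ_{(r,1,1),1}((u,𝐤;v;w),(t))`: hook `(r,1,1)` elementary factorial value, chain length 1:
`Σ_{m ≥ 1, m₁<m₂<m₃ column, m₁ ≤ b row} m^{-t}(m+m₁)^{-u}(m+m₂)^{-v}(m+m₃)^{-w} ∏ b^{-k}`. -/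
noncomputable def efMu1 {n : ℕ} (k : Fin n → ℕ) (u v w t : ℕ) : ℝ :=
  ∑' x : {x : (ℕ × ℕ × ℕ × ℕ) × (Fin n → ℕ) //
      0 < x.1.1 ∧ 0 < x.1.2.1 ∧ x.1.2.1 < x.1.2.2.1 ∧ x.1.2.2.1 < x.1.2.2.2
        ∧ Monotone x.2 ∧ ∀ j, x.1.2.1 ≤ x.2 j},
    ((x.1.1.1 : ℝ) ^ t * ((x.1.1.1 + x.1.1.2.1 : ℕ) : ℝ) ^ u
        * ((x.1.1.1 + x.1.1.2.2.1 : ℕ) : ℝ) ^ v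
        * ((x.1.1.1 + x.1.1.2.2.2 : ℕ) : ℝ) ^ w)⁻¹ * rowProd k x.1.2

/-- Index set of `ef1`. -/
abbrev Ef1Index (n : ℕ) : Type :=
  {x : (ℕ × ℕ × ℕ) × (Fin n → ℕ) //
      0 < x.1.1 ∧ 0 < x.1.2.1 ∧ x.1.2.1 < x.1.2.2 ∧ Monotone x.2 ∧ ∀ j, x.1.2.1 ≤ x.2 j}

/-- Index set of `ef2`. -/
abbrev Ef2Index (n : ℕ) : Type :=
  {x : (ℕ × ℕ × ℕ × ℕ) × (Fin n → ℕ) //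
      0 < x.1.1 ∧ x.1.1 < x.1.2.1 ∧ 0 < x.1.2.2.1 ∧ x.1.2.2.1 < x.1.2.2.2
        ∧ Monotone x.2 ∧ ∀ j, x.1.2.2.1 ≤ x.2 j}

/-- Index set of `efMu1`. -/
abbrev EfMu1Index (n : ℕ) : Type :=
  {x : (ℕ × ℕ × ℕ × ℕ) × (Fin n → ℕ) //
      0 < x.1.1 ∧ 0 < x.1.2.1 ∧ x.1.2.1 < x.1.2.2.1 ∧ x.1.2.2.1 < x.1.2.2.2
        ∧ Monotone x.2 ∧ ∀ j, x.1.2.1 ≤ x.2 j}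

/-- Tuples `((m, q, a, c), b)`: an index `((m, a, c), b)` of `ef1` together with a positive
integer `q`. -/
abbrev ShuffleIndex (n : ℕ) : Type :=
  {x : (ℕ × ℕ × ℕ × ℕ) × (Fin n → ℕ) //
      0 < x.1.1 ∧ 0 < x.1.2.1 ∧ 0 < x.1.2.2.1 ∧ x.1.2.2.1 < x.1.2.2.2
        ∧ Monotone x.2 ∧ ∀ j, x.1.2.2.1 ≤ x.2 j}

/-- The summand of `ef1`. -/
noncomputable def ef1Term {n : ℕ} (k : Fin n → ℕ) (u v t : ℕ) (x : Ef1Index n) : ℝ :=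
  ((x.1.1.1 : ℝ) ^ t * ((x.1.1.1 + x.1.1.2.1 : ℕ) : ℝ) ^ u
        * ((x.1.1.1 + x.1.1.2.2 : ℕ) : ℝ) ^ v)⁻¹ * rowProd k x.1.2

/-- The summand of `ef2`. -/
noncomputable def ef2Term {n : ℕ} (k : Fin n → ℕ) (u v t₁ t₂ : ℕ) (x : Ef2Index n) : ℝ :=
  ((x.1.1.1 : ℝ) ^ t₁ * (x.1.1.2.1 : ℝ) ^ t₂ * ((x.1.1.2.1 + x.1.1.2.2.1 : ℕ) : ℝ) ^ u
        * ((x.1.1.2.1 + x.1.1.2.2.2 : ℕ) : ℝ) ^ v)⁻¹ * rowProd k x.1.2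

/-- The summand of `efMu1`. -/
noncomputable def efMu1Term {n : ℕ} (k : Fin n → ℕ) (u v w t : ℕ) (x : EfMu1Index n) : ℝ :=
  ((x.1.1.1 : ℝ) ^ t * ((x.1.1.1 + x.1.1.2.1 : ℕ) : ℝ) ^ u
        * ((x.1.1.1 + x.1.1.2.2.1 : ℕ) : ℝ) ^ v
        * ((x.1.1.1 + x.1.1.2.2.2 : ℕ) : ℝ) ^ w)⁻¹ * rowProd k x.1.2

lemma rowProd_nonneg {n : ℕ} (k b : Fin n → ℕ) : 0 ≤ rowProd k b := by
  unfold rowProd; positivity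

lemma ef1Term_nonneg {n : ℕ} (k : Fin n → ℕ) (u v t : ℕ) (x : Ef1Index n) :
    0 ≤ ef1Term k u v t x :=
  mul_nonneg (by positivity) (rowProd_nonneg _ _)

lemma ef2Term_nonneg {n : ℕ} (k : Fin n → ℕ) (u v t₁ t₂ : ℕ) (x : Ef2Index n) :
    0 ≤ ef2Term k u v t₁ t₂ x :=
  mul_nonneg (by positivity) (rowProd_nonneg _ _)

lemma efMu1Term_nonneg {n : ℕ} (k : Fin n → ℕ) (u v w t : ℕ) (x : EfMu1Index n) :
    0 ≤ efMu1Term k u v w t x :=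
  mul_nonneg (by positivity) (rowProd_nonneg _ _)

/-- Splitting `((m, q, a, c), b)` into `((m, a, c), b)` and `q`. -/
def splitEquiv (n : ℕ) : ShuffleIndex n ≃ Ef1Index n × {m : ℕ // 0 < m} where
  toFun x := (⟨((x.1.1.1, x.1.1.2.2.1, x.1.1.2.2.2), x.1.2),
    x.2.1, x.2.2.2⟩, ⟨x.1.1.2.1, x.2.2.1⟩)
  invFun y := ⟨((y.1.1.1.1, y.2.1, y.1.1.1.2.1, y.1.1.1.2.2), y.1.1.2),
    y.1.2.1, y.2.2, y.1.2.2⟩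
  left_inv _ := rfl
  right_inv _ := rfl

/-- `(m, q, a, c) ↦ (m, m + q, a, c)`. -/
def chainLeftEquiv (n : ℕ) : ShuffleIndex n ≃ Ef2Index n where
  toFun x := ⟨((x.1.1.1, x.1.1.1 + x.1.1.2.1, x.1.1.2.2), x.1.2),
    x.2.1, Nat.lt_add_of_pos_right x.2.2.1, x.2.2.2⟩
  invFun y := ⟨((y.1.1.1, y.1.1.2.1 - y.1.1.1, y.1.1.2.2), y.1.2),
    y.2.1, Nat.sub_pos_of_lt y.2.2.1, y.2.2.2⟩
  left_inv x := by simp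
  right_inv y := by
    obtain ⟨⟨⟨p, q, r⟩, b⟩, h⟩ := y
    simp only [Subtype.mk.injEq, Prod.mk.injEq, and_true, true_and]
    exact Nat.add_sub_cancel' h.2.1.le

/-- Exchanging `m` and `q` in `((m, q, a, c), b)`. -/
def swapEquiv (n : ℕ) : ShuffleIndex n ≃ ShuffleIndex n where
  toFun x := ⟨((x.1.1.2.1, x.1.1.1, x.1.1.2.2), x.1.2), x.2.2.1, x.2.1, x.2.2.2⟩
  invFun x := ⟨((x.1.1.2.1, x.1.1.1, x.1.1.2.2), x.1.2), x.2.2.1, x.2.1, x.2.2.2⟩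
  left_inv _ := rfl
  right_inv _ := rfl

/-- `(m, q, a, c) ↦ (q, q + m, a, c)`. -/
def chainRightEquiv (n : ℕ) : ShuffleIndex n ≃ Ef2Index n :=
  (swapEquiv n).trans (chainLeftEquiv n)

/-- `(m, q, a, c) ↦ (m, a, a + q, c + q)`. -/
def columnMiddleEquiv (n : ℕ) : ShuffleIndex n ≃ EfMu1Index n where
  toFun x := ⟨((x.1.1.1, x.1.1.2.2.1, x.1.1.2.2.1 + x.1.1.2.1, x.1.1.2.2.2 + x.1.1.2.1), x.1.2),
    x.2.1, x.2.2.2.1, Nat.lt_add_of_pos_right x.2.2.1, Nat.add_lt_add_right x.2.2.2.2.1 _,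
    x.2.2.2.2.2⟩
  invFun y := ⟨((y.1.1.1, y.1.1.2.2.1 - y.1.1.2.1, y.1.1.2.1,
      y.1.1.2.2.2 - (y.1.1.2.2.1 - y.1.1.2.1)), y.1.2),
    y.2.1, Nat.sub_pos_of_lt y.2.2.2.1, y.2.2.1,
    by have := y.2.2.2.1; have := y.2.2.2.2.1; dsimp only; omega, y.2.2.2.2.2⟩
  left_inv x := by simp
  right_inv y := by
    obtain ⟨⟨⟨p, q, r, s⟩, b⟩, h⟩ := y
    have h₁ := h.2.2.1
    have h₂ := h.2.2.2.1
    simp only [Subtype.mk.injEq, Prod.mk.injEq, and_true, true_and]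
    dsimp only at h₁ h₂
    omega

/-- `(m, q, a, c) ↦ (m, a, c, c + q)`. -/
def columnBottomEquiv (n : ℕ) : ShuffleIndex n ≃ EfMu1Index n where
  toFun x := ⟨((x.1.1.1, x.1.1.2.2.1, x.1.1.2.2.2, x.1.1.2.2.2 + x.1.1.2.1), x.1.2),
    x.2.1, x.2.2.2.1, x.2.2.2.2.1, Nat.lt_add_of_pos_right x.2.2.1, x.2.2.2.2.2⟩
  invFun y := ⟨((y.1.1.1, y.1.1.2.2.2 - y.1.1.2.2.1, y.1.1.2.1, y.1.1.2.2.1), y.1.2),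
    y.2.1, Nat.sub_pos_of_lt y.2.2.2.2.1, y.2.2.1, y.2.2.2.1, y.2.2.2.2.2⟩
  left_inv x := by simp
  right_inv y := by
    obtain ⟨⟨⟨p, q, r, s⟩, b⟩, h⟩ := y
    simp only [Subtype.mk.injEq, Prod.mk.injEq, and_true, true_and]
    exact Nat.add_sub_cancel' h.2.2.2.1.le

/-- The partial fraction expansion behind the shuffle product, in terms of reciprocals. -/
lemma shuffle_partial_fractions {x y z w P Q S : ℝ} (hx : x * w = P * (x + w))
    (hy : y * w = Q * (y + w)) (hz : z * w = S * (z + w)) :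
    x ^ 2 * y * z ^ 2 * w ^ 2 =
      x ^ 2 * P ^ 2 * Q * S ^ 2 + 2 * (x * P ^ 3 * Q * S ^ 2)
        + x * P ^ 2 * Q ^ 2 * S ^ 2 + 2 * (x * P ^ 2 * Q * S ^ 3)
        + x ^ 2 * P * Q ^ 2 * S ^ 2 + 2 * (x ^ 2 * P * Q * S ^ 3)
        + w ^ 2 * P ^ 2 * Q * S ^ 2 + 2 * (w * P ^ 3 * Q * S ^ 2)
        + w * P ^ 2 * Q ^ 2 * S ^ 2 + 2 * (w * P ^ 2 * Q * S ^ 3)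
        + x ^ 2 * y * Q ^ 2 * S ^ 2 + 2 * (x ^ 2 * y * Q * S ^ 3)
        + x ^ 2 * y * z ^ 2 * S ^ 2 + 2 * (x ^ 2 * y * z * S ^ 3) := by
  have sq_sq {a s : ℝ} (h : a * w = s * (a + w)) :
      a ^ 2 * w ^ 2 = s ^ 2 * (a ^ 2 + w ^ 2) + 2 * s ^ 3 * (a + w) := by
    linear_combination (a * w + s * (a + w) + 2 * s ^ 2) * h
  have one_sq : y * w ^ 2 = Q ^ 2 * (y + w) + Q * w ^ 2 := by
    linear_combination (w + Q) * hy
  have sq_one : x ^ 2 * w = P ^ 2 * (x + w) + P * x ^ 2 := by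
    linear_combination (x + P) * hx
  linear_combination x ^ 2 * y * sq_sq hz + x ^ 2 * S ^ 2 * one_sq + 2 * x ^ 2 * S ^ 3 * hy
    + Q * S ^ 2 * sq_sq hx + (Q ^ 2 * S ^ 2 + 2 * Q * S ^ 3) * sq_one

lemma inv_mul_inv_eq_inv_add_mul {a q : ℝ} (ha : 0 < a) (hq : 0 < q) :
    a⁻¹ * q⁻¹ = (a + q)⁻¹ * (a⁻¹ + q⁻¹) := by
  field_simp
  ring

/-- The shuffle decomposition of a single summand. -/
lemma ef1Term_mul_eq {n : ℕ} (k : Fin n → ℕ) (x : ShuffleIndex n) :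
    ef1Term k 1 2 2 (splitEquiv n x).1 * ((((splitEquiv n x).2 : ℕ) : ℝ) ^ 2)⁻¹ =
      ef2Term k 1 2 2 2 (chainLeftEquiv n x) + 2 * ef2Term k 1 2 1 3 (chainLeftEquiv n x)
        + ef2Term k 2 2 1 2 (chainLeftEquiv n x) + 2 * ef2Term k 1 3 1 2 (chainLeftEquiv n x)
        + ef2Term k 2 2 2 1 (chainLeftEquiv n x) + 2 * ef2Term k 1 3 2 1 (chainLeftEquiv n x)
        + ef2Term k 1 2 2 2 (chainRightEquiv n x) + 2 * ef2Term k 1 2 1 3 (chainRightEquiv n x)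
        + ef2Term k 2 2 1 2 (chainRightEquiv n x) + 2 * ef2Term k 1 3 1 2 (chainRightEquiv n x)
        + efMu1Term k 1 2 2 2 (columnMiddleEquiv n x)
        + 2 * efMu1Term k 1 1 3 2 (columnMiddleEquiv n x)
        + efMu1Term k 1 2 2 2 (columnBottomEquiv n x)
        + 2 * efMu1Term k 1 1 3 2 (columnBottomEquiv n x) := by
  obtain ⟨⟨⟨m, q, a, c⟩, b⟩, hm, hq, -⟩ := x
  have hm' : (0 : ℝ) < m := by exact_mod_cast hm
  have hq' : (0 : ℝ) < q := by exact_mod_cast hq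
  have key := shuffle_partial_fractions (inv_mul_inv_eq_inv_add_mul hm' hq')
    (inv_mul_inv_eq_inv_add_mul (a := (m : ℝ) + a) (by positivity) hq')
    (inv_mul_inv_eq_inv_add_mul (a := (m : ℝ) + c) (by positivity) hq')
  simp only [ef1Term, ef2Term, efMu1Term, splitEquiv, chainLeftEquiv, chainRightEquiv, swapEquiv,
    columnMiddleEquiv, columnBottomEquiv, Equiv.coe_fn_mk, Equiv.trans_apply]
  push_cast
  rw [show (q : ℝ) + m = m + q by ring, show (m : ℝ) + q + a = m + a + q by ring,
    show (m : ℝ) + q + c = m + c + q by ring, show (m : ℝ) + (a + q) = m + a + q by ring,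
    show (m : ℝ) + (c + q) = m + c + q by ring]
  simp only [mul_inv, ← inv_pow, pow_one]
  linear_combination rowProd k b * key

/-- A product of `n` copies of a nonnegative summable function is summable on `Fin n → ℕ`. -/
lemma summable_fin_prod {n : ℕ} {f : ℕ → ℝ} (hf : ∀ i, 0 ≤ f i) (hs : Summable f) :
    Summable fun b : Fin n → ℕ => ∏ j, f (b j) := by
  classical
  refine summable_of_sum_le (c := ∏ _j : Fin n, ∑' i, f i)
    (fun b => Finset.prod_nonneg fun j _ => hf _) fun s => ?_
  calc ∑ b ∈ s, ∏ j, f (b j)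
      ≤ ∑ b ∈ Fintype.piFinset fun j => s.image fun b => b j, ∏ j, f (b j) := by
        refine Finset.sum_le_sum_of_subset_of_nonneg (fun b hb => ?_)
          fun b _ _ => Finset.prod_nonneg fun j _ => hf _
        exact Fintype.mem_piFinset.2 fun j => Finset.mem_image_of_mem _ hb
    _ = ∏ j : Fin n, ∑ i ∈ s.image fun b => b j, f i := (Finset.prod_univ_sum _ _).symm
    _ ≤ ∏ _j : Fin n, ∑' i, f i :=
        Finset.prod_le_prod (fun j _ => Finset.sum_nonneg fun i _ => hf i)
          fun j _ => hs.sum_le_tsum _ fun i _ => hf i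

/-- For weakly increasing positive `b`, the row product is dominated by a product of
one-variable summable functions. -/
lemma rowProd_le {n : ℕ} {k : Fin n → ℕ} (hk : ∀ j, 1 ≤ k j) {l : Fin n}
    (hl : ∀ j, j ≤ l) (hlast : 2 ≤ k l) {b : Fin n → ℕ} (hb : Monotone b) (hpos : ∀ j, 0 < b j) :
    rowProd k b ≤ ∏ j, ((b j : ℝ) ^ (1 + (n : ℝ)⁻¹))⁻¹ := by
  have hn : n ≠ 0 := (Fin.pos l).ne'
  have hb1 (j : Fin n) : (1 : ℝ) ≤ b j := by exact_mod_cast hpos j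
  rw [rowProd, Finset.prod_inv_distrib]
  refine inv_anti₀ (Finset.prod_pos fun j _ => Real.rpow_pos_of_pos (by linarith [hb1 j]) _) ?_
  have hroot : ∏ j, (b j : ℝ) ^ ((n : ℝ)⁻¹) ≤ b l := by
    calc ∏ j, (b j : ℝ) ^ ((n : ℝ)⁻¹) ≤ ∏ _j : Fin n, (b l : ℝ) ^ ((n : ℝ)⁻¹) := by
          refine Finset.prod_le_prod (fun j _ => by positivity) fun j _ => ?_
          refine Real.rpow_le_rpow (by positivity) ?_ (by positivity)
          exact_mod_cast hb (hl j)
      _ = b l := by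
          rw [Finset.prod_const, Finset.card_univ, Fintype.card_fin,
            Real.rpow_inv_natCast_pow (by positivity) hn]
  calc ∏ j, (b j : ℝ) ^ (1 + (n : ℝ)⁻¹)
      = (∏ j, (b j : ℝ)) * ∏ j, (b j : ℝ) ^ ((n : ℝ)⁻¹) := by
        rw [← Finset.prod_mul_distrib]
        refine Finset.prod_congr rfl fun j _ => ?_
        rw [Real.rpow_add (by linarith [hb1 j]), Real.rpow_one]
    _ ≤ (∏ j, (b j : ℝ)) * b l := by gcongr
    _ = ∏ j, (b j : ℝ) ^ (1 + if l = j then 1 else 0) := by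
        simp only [pow_add, pow_one, Finset.prod_mul_distrib, Finset.prod_pow_boole,
          Finset.mem_univ, if_true]
    _ ≤ ∏ j, (b j : ℝ) ^ k j := by
        refine Finset.prod_le_prod (fun j _ => by positivity) fun j _ => ?_
        refine pow_le_pow_right₀ (hb1 j) ?_
        split_ifs with h
        · exact h ▸ hlast
        · exact hk j

lemma summable_ef1Term {n : ℕ} {k : Fin n → ℕ} (hk : ∀ j, 1 ≤ k j) {l : Fin n}
    (hl : ∀ j, j ≤ l) (hlast : 2 ≤ k l) : Summable (ef1Term k 1 2 2) := by
  have hsq : Summable fun m : ℕ => ((m : ℝ) ^ 2)⁻¹ := Real.summable_nat_pow_inv.2 one_lt_two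
  have hrpow : Summable fun m : ℕ => ((m : ℝ) ^ (3 / 2 : ℝ))⁻¹ :=
    Real.summable_nat_rpow_inv.2 (by norm_num)
  have hrow : Summable fun b : Fin n → ℕ => ∏ j, ((b j : ℝ) ^ (1 + (n : ℝ)⁻¹))⁻¹ :=
    summable_fin_prod (f := fun i : ℕ => ((i : ℝ) ^ (1 + (n : ℝ)⁻¹))⁻¹) (fun i => by positivity)
      (Real.summable_nat_rpow_inv.2 (lt_add_of_pos_right 1 (inv_pos.2 (Nat.cast_pos.2 (Fin.pos l)))))
  have hprod := (hsq.mul_of_nonneg (hrpow.mul_of_nonneg hrpow (fun i => by positivity)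
    (fun i => by positivity)) (fun i => by positivity)
    (fun i => mul_nonneg (by positivity) (by positivity))).mul_of_nonneg hrow
    (fun i => mul_nonneg (by positivity) (mul_nonneg (by positivity) (by positivity)))
    (fun b => Finset.prod_nonneg fun j _ => by positivity)
  refine Summable.of_nonneg_of_le (ef1Term_nonneg k 1 2 2) (fun x => ?_)
    (hprod.comp_injective Subtype.val_injective)
  obtain ⟨⟨⟨m, a, c⟩, b⟩, hm, ha, hac, hb, hab⟩ := x
  dsimp only at hm ha hac hb hab
  have hm' : (0 : ℝ) < m := by exact_mod_cast hm
  have ha' : (0 : ℝ) < a := by exact_mod_cast ha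
  have hac' : (a : ℝ) < c := by exact_mod_cast hac
  have hc' : (0 : ℝ) < c := ha'.trans hac'
  refine mul_le_mul ?_ (rowProd_le hk hl hlast hb fun j => ha.trans_le (hab j))
    (rowProd_nonneg _ _) (by positivity)
  dsimp only
  rw [← mul_inv, ← mul_inv]
  refine inv_anti₀ (by positivity) ?_
  have hhalf : (a : ℝ) ^ (3 / 2 : ℝ) * (c : ℝ) ^ (3 / 2 : ℝ) ≤ a * (c : ℝ) ^ 2 := by
    rw [show (3 / 2 : ℝ) = 1 + 1 / 2 by norm_num, Real.rpow_add ha', Real.rpow_add hc',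
      Real.rpow_one, Real.rpow_one]
    have h₁ : (a : ℝ) ^ (1 / 2 : ℝ) ≤ (c : ℝ) ^ (1 / 2 : ℝ) :=
      Real.rpow_le_rpow ha'.le hac'.le (by norm_num)
    have h₂ : (c : ℝ) ^ (1 / 2 : ℝ) * (c : ℝ) ^ (1 / 2 : ℝ) = c := by
      rw [← Real.rpow_add hc']; norm_num
    calc (a : ℝ) * a ^ (1 / 2 : ℝ) * (c * c ^ (1 / 2 : ℝ))
        ≤ a * c ^ (1 / 2 : ℝ) * (c * c ^ (1 / 2 : ℝ)) := by gcongr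
      _ = a * c * (c ^ (1 / 2 : ℝ) * c ^ (1 / 2 : ℝ)) := by ring
      _ = a * (c : ℝ) ^ 2 := by rw [h₂]; ring
  calc (m : ℝ) ^ 2 * ((a : ℝ) ^ (3 / 2 : ℝ) * (c : ℝ) ^ (3 / 2 : ℝ))
      ≤ (m : ℝ) ^ 2 * (a * (c : ℝ) ^ 2) := by gcongr
    _ ≤ (m : ℝ) ^ 2 * ((m + a : ℕ) ^ 1 * (m + c : ℕ) ^ 2) := by
        push_cast
        rw [pow_one]
        gcongr <;> linarith
    _ = _ := by ring

/-- A function that pulls back along `e` to one dominated by a summable `F` has the expected sum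
over the source of `e`. -/
lemma hasSum_comp_equiv_of_le {α β : Type*} (e : α ≃ β) {F : α → ℝ} (hF : Summable F) {g : β → ℝ}
    (hg : ∀ y, 0 ≤ g y) (hle : ∀ x, g (e x) ≤ F x) : HasSum (fun x => g (e x)) (∑' y, g y) := by
  rw [← e.tsum_eq g]
  exact (Summable.of_nonneg_of_le (fun x => hg _) hle hF).hasSum

/-- Shuffle decomposition in depth:
`ζ_{(r,1),1}((1,𝐤;2),(2))·ζ(2) = 2ζ_{(r,1),2}((1,𝐤;2),(2,2)) + 4ζ_{(r,1),2}((1,𝐤;2),(1,3))`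
`+ 2ζ_{(r,1),2}((2,𝐤;2),(1,2)) + 4ζ_{(r,1),2}((1,𝐤;3),(1,2)) + ζ_{(r,1),2}((2,𝐤;2),(2,1))`
`+ 2ζ_{(r,1),2}((1,𝐤;3),(2,1)) + 2ζ_{(r,1,1),1}((1,𝐤;2;2),(2)) + 4ζ_{(r,1,1),1}((1,𝐤;1;3),(2))`. -/
theorem shuffle_depth_ef (n : ℕ) (hn : 1 ≤ n) (k : Fin n → ℕ)
    (hk : ∀ j, 1 ≤ k j) (hlast : 2 ≤ k ⟨n - 1, by omega⟩) :
    ef1 k 1 2 2 * (∑' m : {m : ℕ // 0 < m}, (((m : ℕ) : ℝ) ^ 2)⁻¹) =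
      2 * ef2 k 1 2 2 2 + 4 * ef2 k 1 2 1 3 + 2 * ef2 k 2 2 1 2 + 4 * ef2 k 1 3 1 2
        + ef2 k 2 2 2 1 + 2 * ef2 k 1 3 2 1
        + 2 * efMu1 k 1 2 2 2 + 4 * efMu1 k 1 1 3 2 := by
  set F : ShuffleIndex n → ℝ := fun x =>
    ef1Term k 1 2 2 (splitEquiv n x).1 * ((((splitEquiv n x).2 : ℕ) : ℝ) ^ 2)⁻¹
  have hsq : Summable fun m : {m : ℕ // 0 < m} => (((m : ℕ) : ℝ) ^ 2)⁻¹ :=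
    (Real.summable_nat_pow_inv.2 one_lt_two).comp_injective Subtype.val_injective
  have hsummable := summable_ef1Term hk (fun j => Fin.le_def.2 (Nat.le_sub_one_of_lt j.2)) hlast
  have hmul := hsummable.hasSum.mul hsq.hasSum
    (hsummable.mul_of_nonneg hsq (ef1Term_nonneg k 1 2 2)
      fun m => by positivity)
  have hF : HasSum F (ef1 k 1 2 2 * ∑' m : {m : ℕ // 0 < m}, (((m : ℕ) : ℝ) ^ 2)⁻¹) :=
    (splitEquiv n).hasSum_iff.2 hmul
  have hL {u v t₁ t₂ : ℕ} (hle : ∀ x, ef2Term k u v t₁ t₂ (chainLeftEquiv n x) ≤ F x) :=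
    hasSum_comp_equiv_of_le _ hF.summable (ef2Term_nonneg k u v t₁ t₂) hle
  have hR {u v t₁ t₂ : ℕ} (hle : ∀ x, ef2Term k u v t₁ t₂ (chainRightEquiv n x) ≤ F x) :=
    hasSum_comp_equiv_of_le _ hF.summable (ef2Term_nonneg k u v t₁ t₂) hle
  have hM {u v w t : ℕ} (hle : ∀ x, efMu1Term k u v w t (columnMiddleEquiv n x) ≤ F x) :=
    hasSum_comp_equiv_of_le _ hF.summable (efMu1Term_nonneg k u v w t) hle
  have hB {u v w t : ℕ} (hle : ∀ x, efMu1Term k u v w t (columnBottomEquiv n x) ≤ F x) :=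
    hasSum_comp_equiv_of_le _ hF.summable (efMu1Term_nonneg k u v w t) hle
  have nL (u v t₁ t₂ x) := ef2Term_nonneg k u v t₁ t₂ (chainLeftEquiv n x)
  have nR (u v t₁ t₂ x) := ef2Term_nonneg k u v t₁ t₂ (chainRightEquiv n x)
  have nM (u v w t x) := efMu1Term_nonneg k u v w t (columnMiddleEquiv n x)
  have nB (u v w t x) := efMu1Term_nonneg k u v w t (columnBottomEquiv n x)
  have hsum := ((((((((((((((hL (u := 1) (v := 2) (t₁ := 2) (t₂ := 2) ?_).add
    ((hL (u := 1) (v := 2) (t₁ := 1) (t₂ := 3) ?_).mul_left 2)).add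
    (hL (u := 2) (v := 2) (t₁ := 1) (t₂ := 2) ?_)).add
    ((hL (u := 1) (v := 3) (t₁ := 1) (t₂ := 2) ?_).mul_left 2)).add
    (hL (u := 2) (v := 2) (t₁ := 2) (t₂ := 1) ?_)).add
    ((hL (u := 1) (v := 3) (t₁ := 2) (t₂ := 1) ?_).mul_left 2)).add
    (hR (u := 1) (v := 2) (t₁ := 2) (t₂ := 2) ?_)).add
    ((hR (u := 1) (v := 2) (t₁ := 1) (t₂ := 3) ?_).mul_left 2)).add
    (hR (u := 2) (v := 2) (t₁ := 1) (t₂ := 2) ?_)).add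
    ((hR (u := 1) (v := 3) (t₁ := 1) (t₂ := 2) ?_).mul_left 2)).add
    (hM (u := 1) (v := 2) (w := 2) (t := 2) ?_)).add
    ((hM (u := 1) (v := 1) (w := 3) (t := 2) ?_).mul_left 2)).add
    (hB (u := 1) (v := 2) (w := 2) (t := 2) ?_)).add
    ((hB (u := 1) (v := 1) (w := 3) (t := 2) ?_).mul_left 2))
  · have huniq := hF.unique ((funext fun x => ef1Term_mul_eq k x : F = _) ▸ hsum)
    simp only [ef2, efMu1]
    simp only [ef2Term, efMu1Term] at huniq
    linarith
  all_goals
    intro x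
    rw [show F x = _ from ef1Term_mul_eq k x]
    linarith [nL 1 2 2 2 x, nL 1 2 1 3 x, nL 2 2 1 2 x, nL 1 3 1 2 x, nL 2 2 2 1 x,
      nL 1 3 2 1 x, nR 1 2 2 2 x, nR 1 2 1 3 x, nR 2 2 1 2 x, nR 1 3 1 2 x, nM 1 2 2 2 x,
      nM 1 1 3 2 x, nB 1 2 2 2 x, nB 1 1 3 2 x]
end

section
/- For the hook λ = (λ₁, 1^{r-1}) and positive-integer exponent tableau 𝐤 = (k_{ij}) with corner entries ≥ 2 as needed for convergence, the elementary factorial value with a single extra variable of exponent 1 satisfies: ζ_{λ,1}(𝐤, (1)) = ζ_{skew} − Σ_{i=1}^{r} Σ ζ_{(λ₁,1^r)}(ℓ₁,…;…), explicitly: Σ_{m ≥ 1, SSYT fillings} ∏(m+m_{i1})^{-k_{i1}} ∏ m_{1j}^{-k_{1j}} / m = [the skew Schur value with one extra box of exponent 1 adjoined at the bottom-left, i.e., Σ over fillings of the skew shape with an extra entry n satisfying n ≤ m_{r1}... as in the paper's diagram, of n^{-1} ∏ m_{ij}^{-k_{ij}}] − Σ_{i=1}^{r} Σ_{ℓ_i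 + ℓ_{i+1} = 1 + k_{i1}, ℓ_i, ℓ_{i+1} ≥ 1, ℓ_{r+1} ≥ 2} ζ_{(λ₁,1^r)} with column exponents (ℓ₁,…,ℓ_{r+1}) where ℓ_a = k_{a1} for a < i and ℓ_{a+1} = k_{a1} for a > i, and row exponents (k_{12},…,k_{1λ₁}). -/
/-- Row weight `∏_{j=2}^{λ₁} b_j^{-kr_j}` (with `λ₁ = n+1`, `b` indexed by `Fin n`,
`kr` 1-based so the `j`-th row box has exponent `kr j`). -/
noncomputable def rowWt (n : ℕ) (kr : ℕ → ℕ) (b : Fin n → ℕ) : ℝ :=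
  (∏ j, ((b j : ℝ)) ^ (kr (j.val + 2)))⁻¹

/-- `ζ_{λ,1}(𝐤,(1))` for the hook `λ = (n+1, 1^{r-1})`: sum over `m ≥ 1`, column
`v₁ < ⋯ < v_r` and row `v₁ ≤ b₂ ≤ ⋯` of `m⁻¹ ∏ b_j^{-kr_j} ∏ (m+v_i)^{-kc_i}`
(`kc` 1-based). -/
noncomputable def efOne (n r : ℕ) (hr : 0 < r) (kc kr : ℕ → ℕ) : ℝ :=
  ∑' x : {x : ℕ × (Fin r → ℕ) × (Fin n → ℕ) //
      0 < x.1 ∧ StrictMono x.2.1 ∧ 0 < x.2.1 ⟨0, hr⟩ ∧ Monotone x.2.2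
        ∧ ∀ j, x.2.1 ⟨0, hr⟩ ≤ x.2.2 j},
    (x.1.1 : ℝ)⁻¹ * rowWt n kr x.1.2.2
      * (∏ i, (((x.1.1 + x.1.2.1 i : ℕ) : ℝ)) ^ (kc (i.val + 1)))⁻¹

/-- The skew value: one extra box of exponent 1 adjoined at the bottom-left, whose entry
`m` satisfies only `m ≤ v_r`. -/
noncomputable def skewOne (n r : ℕ) (hr : 0 < r) (kc kr : ℕ → ℕ) : ℝ :=
  ∑' x : {x : ℕ × (Fin r → ℕ) × (Fin n → ℕ) //
      0 < x.1 ∧ x.1 ≤ x.2.1 ⟨r - 1, by omega⟩ ∧ StrictMono x.2.1 ∧ 0 < x.2.1 ⟨0, hr⟩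
        ∧ Monotone x.2.2 ∧ ∀ j, x.2.1 ⟨0, hr⟩ ≤ x.2.2 j},
    (x.1.1 : ℝ)⁻¹ * rowWt n kr x.1.2.2
      * (∏ i, ((x.1.2.1 i : ℝ)) ^ (kc (i.val + 1)))⁻¹

/-- Hook `(n+1, 1^r)` Schur MZV with column exponents `e` (1-based, `r+1` of them) and row
exponents `kr`. -/
noncomputable def hookVal (n r : ℕ) (e kr : ℕ → ℕ) : ℝ :=
  ∑' x : {x : (Fin (r + 1) → ℕ) × (Fin n → ℕ) //
      StrictMono x.1 ∧ 0 < x.1 0 ∧ Monotone x.2 ∧ ∀ j, x.1 0 ≤ x.2 j},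
    rowWt n kr x.1.2 * (∏ a, ((x.1.1 a : ℝ)) ^ (e (a.val + 1)))⁻¹

/-- Column exponents `(ℓ₁,…,ℓ_{r+1})` obtained from `kc` by replacing the `i`-th exponent
`kc i` with the pair `(p, 1 + kc i − p)`. -/
def splitExp (kc : ℕ → ℕ) (i p : ℕ) : ℕ → ℕ := fun a =>
  if a < i then kc a else if a = i then p else if a = i + 1 then 1 + kc i - p else kc (a - 1)

theorem inv_mul_inv_pow_add_sum_eq {m v : ℝ} (hm : 0 < m) (hv : 0 < v) (k : ℕ) :
    m⁻¹ * ((m + v) ^ k)⁻¹ + ∑ p ∈ Finset.Icc 1 k, (v ^ p)⁻¹ * ((m + v) ^ (1 + k - p))⁻¹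
      = m⁻¹ * (v ^ k)⁻¹ := by
  induction k with
  | zero => simp
  | succ k ih =>
    have hmv : m + v ≠ 0 := by positivity
    have hshift : ∀ p ∈ Finset.Icc 1 k, (v ^ p)⁻¹ * ((m + v) ^ (1 + (k + 1) - p))⁻¹
        = (m + v)⁻¹ * ((v ^ p)⁻¹ * ((m + v) ^ (1 + k - p))⁻¹) := by
      intro p hp
      rw [Finset.mem_Icc] at hp
      rw [show 1 + (k + 1) - p = (1 + k - p) + 1 by omega, pow_succ, mul_inv]
      ring
    rw [Finset.sum_Icc_succ_top (by omega), Finset.sum_congr rfl hshift, ← Finset.mul_sum,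
      eq_sub_of_add_eq' ih, show 1 + (k + 1) - (k + 1) = 1 by omega]
    field_simp
    ring

theorem hasSum_inv_sub_inv_add (V : ℕ) :
    HasSum (fun m : ℕ => ((m : ℝ) + 1)⁻¹ - ((m : ℝ) + 1 + V)⁻¹)
      (∑ j ∈ Finset.range V, ((j : ℝ) + 1)⁻¹) := by
  induction V with
  | zero => simp
  | succ V ih =>
    have hstep : HasSum (fun m : ℕ => ((m : ℝ) + 1 + V)⁻¹ - ((m : ℝ) + 1 + (V + 1 : ℕ))⁻¹)
        ((V : ℝ) + 1)⁻¹ := by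
      rw [hasSum_iff_tendsto_nat_of_nonneg]
      · have htel : ∀ n : ℕ, ∑ m ∈ Finset.range n,
            (((m : ℝ) + 1 + V)⁻¹ - ((m : ℝ) + 1 + (V + 1 : ℕ))⁻¹)
            = ((V : ℝ) + 1)⁻¹ - ((n : ℝ) + (1 + V))⁻¹ := by
          intro n
          have := Finset.sum_range_sub' (fun m : ℕ => ((m : ℝ) + 1 + V)⁻¹) n
          simp only [Nat.cast_add, Nat.cast_one, Nat.cast_zero] at this ⊢
          rw [show ((V : ℝ) + 1) = 0 + 1 + V by ring, ← add_assoc, ← this]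
          refine Finset.sum_congr rfl fun m _ => ?_
          ring_nf
        simp only [htel]
        have h0 : Filter.Tendsto (fun n : ℕ => ((n : ℝ) + (1 + V))⁻¹) Filter.atTop (nhds 0) :=
          tendsto_inv_atTop_zero.comp
            (Filter.tendsto_atTop_add_const_right _ _ tendsto_natCast_atTop_atTop)
        simpa using h0.const_sub ((V : ℝ) + 1)⁻¹
      · intro m
        rw [sub_nonneg]
        push_cast
        gcongr
        linarith
    have := ih.add hstep
    rw [Finset.sum_range_succ]
    simpa using this

theorem summable_pi_prod {α : Type*} {f : α → ℝ} (hf : Summable f) (h0 : ∀ a, 0 ≤ f a) (d : ℕ) :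
    Summable fun x : Fin d → α => ∏ i, f (x i) := by
  induction d with
  | zero => exact (hasSum_fintype _).summable
  | succ d ih =>
    rw [← (Fin.consEquiv fun _ : Fin (d + 1) => α).summable_iff]
    refine (hf.mul_of_nonneg ih h0 fun x => Finset.prod_nonneg fun i _ => h0 _).congr fun x => ?_
    simp [Fin.prod_univ_succ, Fin.consEquiv]

/-- Cost of one extra power of the largest entry, spread evenly over all entries. -/
theorem inv_prod_pow_le_prod_rpow {d : ℕ} (c : Fin d) (x k : Fin d → ℕ) (hx : ∀ i, 0 < x i)
    (hc : ∀ i, x i ≤ x c) (hk : ∀ i, 1 ≤ k i) (hkc : 2 ≤ k c) :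
    (∏ i, (x i : ℝ) ^ k i)⁻¹ ≤ ∏ i, ((x i : ℝ) ^ (1 + (d : ℝ)⁻¹))⁻¹ := by
  have hd : (d : ℝ) ≠ 0 := by
    have := c.pos
    positivity
  have hx' : ∀ i, (1 : ℝ) ≤ x i := fun i => by exact_mod_cast hx i
  have hx0 : ∀ i, (0 : ℝ) < x i := fun i => by exact_mod_cast hx i
  rw [← Finset.prod_inv_distrib, Finset.prod_inv_distrib, Finset.prod_inv_distrib]
  refine inv_anti₀ (Finset.prod_pos fun i _ => Real.rpow_pos_of_pos (hx0 i) _) ?_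
  calc ∏ i, (x i : ℝ) ^ (1 + (d : ℝ)⁻¹)
      = (∏ i, (x i : ℝ)) * ∏ i, (x i : ℝ) ^ (d : ℝ)⁻¹ := by
        rw [← Finset.prod_mul_distrib]
        refine Finset.prod_congr rfl fun i _ => ?_
        rw [Real.rpow_add (hx0 i), Real.rpow_one]
    _ ≤ (∏ i, (x i : ℝ)) * ∏ _i : Fin d, (x c : ℝ) ^ (d : ℝ)⁻¹ := by
        refine mul_le_mul_of_nonneg_left (Finset.prod_le_prod (fun i _ => by positivity)
          fun i _ => ?_) (Finset.prod_nonneg fun i _ => (hx0 i).le)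
        exact Real.rpow_le_rpow (hx0 i).le (by exact_mod_cast hc i) (by positivity)
    _ = (∏ i, (x i : ℝ)) * x c := by
        rw [Finset.prod_const, Finset.card_univ, Fintype.card_fin, ← Real.rpow_natCast,
          ← Real.rpow_mul (hx0 c).le, inv_mul_cancel₀ hd, Real.rpow_one]
    _ ≤ ∏ i, (x i : ℝ) ^ k i := by
        rw [← Finset.mul_prod_erase _ _ (Finset.mem_univ c),
          ← Finset.mul_prod_erase _ (fun i => (x i : ℝ) ^ k i) (Finset.mem_univ c), mul_right_comm,
          ← pow_two]
        exact mul_le_mul (pow_le_pow_right₀ (hx' c) hkc)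
          (Finset.prod_le_prod (fun i _ => (hx0 i).le) fun i _ =>
            le_self_pow₀ (hx' i) (by have := hk i; omega))
          (Finset.prod_nonneg fun i _ => (hx0 i).le) (by positivity)

theorem summable_inv_prod_pow {d : ℕ} (c : Fin d) (k : Fin d → ℕ) (hk : ∀ i, 1 ≤ k i)
    (hkc : 2 ≤ k c) :
    Summable fun x : {x : Fin d → ℕ // (∀ i, 0 < x i) ∧ ∀ i, x i ≤ x c} =>
      (∏ i, (x.1 i : ℝ) ^ k i)⁻¹ := by
  have hd : (0 : ℝ) < (d : ℝ)⁻¹ := by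
    have := c.pos
    positivity
  have hsum := summable_pi_prod (Real.summable_nat_rpow_inv.2 (lt_add_of_pos_right 1 hd))
    (fun a => by positivity) d
  exact Summable.of_nonneg_of_le (fun x => by positivity)
    (fun x => inv_prod_pow_le_prod_rpow c x.1 k x.2.1 x.2.2 hk hkc)
    (hsum.subtype {x : Fin d → ℕ | (∀ i, 0 < x i) ∧ ∀ i, x i ≤ x c})

/-- Fillings of the hook `(n+1, 1^{r-1})`: a column together with a row. -/
abbrev HookFilling (n r : ℕ) (hr : 0 < r) : Type :=
  {y : (Fin r → ℕ) × (Fin n → ℕ) //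
    StrictMono y.1 ∧ 0 < y.1 ⟨0, hr⟩ ∧ Monotone y.2 ∧ ∀ j, y.1 ⟨0, hr⟩ ≤ y.2 j}

/-- Index set of `efOne`. -/
abbrev EfFilling (n r : ℕ) (hr : 0 < r) : Type :=
  {x : ℕ × (Fin r → ℕ) × (Fin n → ℕ) //
      0 < x.1 ∧ StrictMono x.2.1 ∧ 0 < x.2.1 ⟨0, hr⟩ ∧ Monotone x.2.2
        ∧ ∀ j, x.2.1 ⟨0, hr⟩ ≤ x.2.2 j}

/-- Index set of `skewOne`. -/
abbrev SkewFilling (n r : ℕ) (hr : 0 < r) : Type :=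
  {x : ℕ × (Fin r → ℕ) × (Fin n → ℕ) //
      0 < x.1 ∧ x.1 ≤ x.2.1 ⟨r - 1, by omega⟩ ∧ StrictMono x.2.1 ∧ 0 < x.2.1 ⟨0, hr⟩
        ∧ Monotone x.2.2 ∧ ∀ j, x.2.1 ⟨0, hr⟩ ≤ x.2.2 j}

theorem rowWt_nonneg (n : ℕ) (kr : ℕ → ℕ) (b : Fin n → ℕ) : 0 ≤ rowWt n kr b := by
  unfold rowWt
  positivity

theorem pos_of_strictMono {r : ℕ} (hr : 0 < r) {v : Fin r → ℕ} (hv : StrictMono v)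
    (h0 : 0 < v ⟨0, hr⟩) (i : Fin r) : 0 < v i :=
  h0.trans_le (hv.monotone (Fin.mk_le_of_le_val (Nat.zero_le _)))

theorem summable_rowWt (n : ℕ) (kr : ℕ → ℕ) (hkr : ∀ j, 2 ≤ j → j ≤ n + 1 → 1 ≤ kr j)
    (hkrl : 0 < n → 2 ≤ kr (n + 1)) :
    Summable fun b : {b : Fin n → ℕ // (∀ j, 0 < b j) ∧ Monotone b} => rowWt n kr b.1 := by
  rcases n.eq_zero_or_pos with rfl | hn
  · exact (hasSum_fintype _).summable
  · have hlast := summable_inv_prod_pow (⟨n - 1, by omega⟩ : Fin n) (fun j => kr (j.val + 2))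
      (fun j => hkr _ (by omega) (by omega))
      (by simpa [show n - 1 + 2 = n + 1 by omega] using hkrl hn)
    let e : {b : Fin n → ℕ // (∀ j, 0 < b j) ∧ Monotone b} →
        {b : Fin n → ℕ // (∀ j, 0 < b j) ∧ ∀ j, b j ≤ b ⟨n - 1, by omega⟩} :=
      fun b => ⟨b.1, b.2.1, fun j => b.2.2 (Fin.mk_le_mk.2 (by omega))⟩
    exact hlast.comp_injective (i := e) fun b b' h => Subtype.ext (congrArg (·.1) h)

theorem summable_skewOne (n r : ℕ) (hr : 0 < r) (kc kr : ℕ → ℕ)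
    (hkc : ∀ i, 1 ≤ i → i ≤ r → 1 ≤ kc i) (hkcr : 2 ≤ kc r)
    (hkr : ∀ j, 2 ≤ j → j ≤ n + 1 → 1 ≤ kr j) (hkrl : 0 < n → 2 ≤ kr (n + 1)) :
    Summable fun x : SkewFilling n r hr => (x.1.1 : ℝ)⁻¹ * rowWt n kr x.1.2.2
      * (∏ i, ((x.1.2.1 i : ℝ)) ^ (kc (i.val + 1)))⁻¹ := by
  have hlast : Fin.last r = Fin.succ ⟨r - 1, by omega⟩ := by
    ext
    simp
    omega
  have hcol := summable_inv_prod_pow (Fin.last r)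
    (Fin.cons 1 fun i : Fin r => kc (i.val + 1)) (by
      intro i
      refine Fin.cases ?_ (fun j => ?_) i
      · simp
      · simpa using hkc _ (by omega) (by omega))
    (by
      rw [hlast, Fin.cons_succ]
      simpa only [Nat.sub_add_cancel hr] using hkcr)
  have hprod := hcol.mul_of_nonneg (summable_rowWt n kr hkr hkrl)
    (fun x => by positivity) fun b => rowWt_nonneg n kr b.1
  let e : SkewFilling n r hr →
      {x : Fin (r + 1) → ℕ // (∀ i, 0 < x i) ∧ ∀ i, x i ≤ x (Fin.last r)} ×
        {b : Fin n → ℕ // (∀ j, 0 < b j) ∧ Monotone b} := fun x =>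
    (⟨Fin.cons x.1.1 x.1.2.1, by
        intro i
        refine Fin.cases ?_ (fun j => ?_) i
        · simpa using x.2.1
        · simpa using pos_of_strictMono hr x.2.2.2.1 x.2.2.2.2.1 j, by
        intro i
        rw [hlast, Fin.cons_succ]
        refine Fin.cases ?_ (fun j => ?_) i
        · exact x.2.2.1
        · exact x.2.2.2.1.monotone (Fin.mk_le_mk.2 (by omega))⟩,
      ⟨x.1.2.2, fun j => x.2.2.2.2.1.trans_le (x.2.2.2.2.2.2 j), x.2.2.2.2.2.1⟩)
  have he : Function.Injective e := by
    intro x y h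
    simp only [e, Prod.mk.injEq, Subtype.mk.injEq, Fin.cons_inj] at h
    exact Subtype.ext (Prod.ext h.1.1 (Prod.ext h.1.2 h.2))
  refine (hprod.comp_injective he).congr fun x => ?_
  simp [e, Fin.prod_univ_succ]
  ring

/-- Splitting the adjoined entry off a skew filling. -/
def skewFillingEquiv (n r : ℕ) (hr : 0 < r) :
    (Σ y : HookFilling n r hr, Fin (y.1.1 ⟨r - 1, by omega⟩)) ≃ SkewFilling n r hr where
  toFun s := ⟨(s.2.val + 1, s.1.1), Nat.succ_pos _, s.2.isLt, s.1.2⟩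
  invFun x := ⟨⟨x.1.2, x.2.2.2⟩, ⟨x.1.1 - 1, by have := x.2.1; have := x.2.2.1; simp only; omega⟩⟩
  left_inv _ := rfl
  right_inv x := Subtype.ext (Prod.ext (Nat.sub_add_cancel x.2.1) rfl)

/-- Splitting the extra variable off an index of `efOne`. -/
def efFillingEquiv (n r : ℕ) (hr : 0 < r) : HookFilling n r hr × ℕ ≃ EfFilling n r hr where
  toFun s := ⟨(s.2 + 1, s.1.1), Nat.succ_pos _, s.1.2⟩
  invFun x := (⟨x.1.2, x.2.2⟩, x.1.1 - 1)
  left_inv _ := rfl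
  right_inv x := Subtype.ext (Prod.ext (Nat.sub_add_cancel x.2.1) rfl)

theorem hasSum_harmonic_eq_skewOne (n r : ℕ) (hr : 0 < r) (kc kr : ℕ → ℕ)
    (hkc : ∀ i, 1 ≤ i → i ≤ r → 1 ≤ kc i) (hkcr : 2 ≤ kc r)
    (hkr : ∀ j, 2 ≤ j → j ≤ n + 1 → 1 ≤ kr j) (hkrl : 0 < n → 2 ≤ kr (n + 1)) :
    HasSum (fun x : EfFilling n r hr => rowWt n kr x.1.2.2
        * (∏ i, ((x.1.2.1 i : ℝ)) ^ (kc (i.val + 1)))⁻¹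
        * ((x.1.1 : ℝ)⁻¹ - ((x.1.1 : ℝ) + x.1.2.1 ⟨r - 1, by omega⟩)⁻¹))
      (skewOne n r hr kc kr) := by
  let W : HookFilling n r hr → ℝ := fun y =>
    rowWt n kr y.1.2 * (∏ i, ((y.1.1 i : ℝ)) ^ (kc (i.val + 1)))⁻¹
  have hW : ∀ y, 0 ≤ W y := fun y => mul_nonneg (rowWt_nonneg _ _ _) (by positivity)
  have hskew : HasSum (fun y => W y * ∑ j ∈ Finset.range (y.1.1 ⟨r - 1, by omega⟩), ((j : ℝ) + 1)⁻¹)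
      (skewOne n r hr kc kr) := by
    have h := (skewFillingEquiv n r hr).hasSum_iff.2
      (summable_skewOne n r hr kc kr hkc hkcr hkr hkrl).hasSum
    refine h.sigma fun y => ?_
    rw [← Fin.sum_univ_eq_sum_range (fun j => ((j : ℝ) + 1)⁻¹), Finset.mul_sum]
    convert hasSum_fintype _ using 2 with j
    simp [skewFillingEquiv, W]
    ring
  have hfib := fun y : HookFilling n r hr =>
    (hasSum_inv_sub_inv_add (y.1.1 ⟨r - 1, by omega⟩)).mul_left (W y)
  rw [← (efFillingEquiv n r hr).hasSum_iff]
  have hsum : Summable fun s : HookFilling n r hr × ℕ =>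
      W s.1 * (((s.2 : ℝ) + 1)⁻¹ - ((s.2 : ℝ) + 1 + s.1.1.1 ⟨r - 1, by omega⟩)⁻¹) := by
    rw [summable_prod_of_nonneg]
    · exact ⟨fun y => (hfib y).summable, by simpa only [fun y => (hfib y).tsum_eq] using hskew.summable⟩
    · intro s
      refine mul_nonneg (hW _) (sub_nonneg.2 ?_)
      exact inv_anti₀ (by positivity) (le_add_of_nonneg_right (by positivity))
  have := hsum.hasSum
  rw [(hsum.hasSum.prod_fiberwise hfib).unique hskew] at this
  convert this using 2 with s
  simp [efFillingEquiv, W]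

/-- The column `v₁ < ⋯ < v_c < m + v_c < ⋯ < m + v_r` (with `c` counted from `0`). -/
def shiftCol {r : ℕ} (c : Fin r) (m : ℕ) (v : Fin r → ℕ) (a : Fin (r + 1)) : ℕ :=
  if h : a.val ≤ c.val then v ⟨a.val, by omega⟩ else m + v ⟨a.val - 1, by omega⟩

theorem shiftCol_castSucc_of_le {r : ℕ} {c j : Fin r} (h : j ≤ c) (m : ℕ) (v : Fin r → ℕ) :
    shiftCol c m v j.castSucc = v j := by
  rw [Fin.le_def] at h
  simp [shiftCol, h]

theorem shiftCol_succ_of_le {r : ℕ} {c j : Fin r} (h : c ≤ j) (m : ℕ) (v : Fin r → ℕ) :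
    shiftCol c m v j.succ = m + v j := by
  rw [Fin.le_def] at h
  simp [shiftCol, show ¬ j.val + 1 ≤ c.val by omega]

/-- Absorbing the extra variable into the column of the hook `(n+1, 1^r)`. -/
def shiftEquiv (n r : ℕ) (hr : 0 < r) (c : Fin r) : EfFilling n r hr ≃
    {x : (Fin (r + 1) → ℕ) × (Fin n → ℕ) //
      StrictMono x.1 ∧ 0 < x.1 0 ∧ Monotone x.2 ∧ ∀ j, x.1 0 ≤ x.2 j} where
  toFun x := ⟨(shiftCol c x.1.1 x.1.2.1, x.1.2.2), by
    obtain ⟨⟨m, v, b⟩, hm, hv, h0, hb, hvb⟩ := x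
    have hzero : shiftCol c m v 0 = v ⟨0, hr⟩ :=
      shiftCol_castSucc_of_le (j := ⟨0, hr⟩) (Fin.mk_le_of_le_val (Nat.zero_le _)) m v
    refine ⟨fun a a' h => ?_, by simpa only [hzero] using h0, hb, by simpa only [hzero] using hvb⟩
    rw [Fin.lt_def] at h
    simp only [shiftCol] at hm ⊢
    split_ifs with h1 h2 h2
    · exact hv (Fin.mk_lt_mk.2 h)
    · exact (hv.monotone (Fin.mk_le_mk.2 (by omega))).trans_lt (Nat.lt_add_of_pos_left hm)
    · omega
    · exact Nat.add_lt_add_left (hv (Fin.mk_lt_mk.2 (by omega))) m⟩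
  invFun y := ⟨(y.1.1 c.succ - y.1.1 c.castSucc,
      fun j => if j ≤ c then y.1.1 j.castSucc
        else y.1.1 j.succ - (y.1.1 c.succ - y.1.1 c.castSucc), y.1.2), by
    obtain ⟨⟨w, b⟩, hw, h0, hb, hwb⟩ := y
    dsimp only at hw
    have hc : w c.castSucc < w c.succ := hw Fin.castSucc_lt_succ
    have hzero : (⟨0, hr⟩ : Fin r) ≤ c := Fin.mk_le_of_le_val (Nat.zero_le _)
    refine ⟨Nat.sub_pos_of_lt hc, fun j j' h => ?_, ?_, hb, ?_⟩
    · have h1 := hw (Fin.castSucc_lt_castSucc_iff.2 h)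
      have h2 := hw (Fin.succ_lt_succ_iff.2 h)
      dsimp only
      split_ifs with hj hj' hj'
      · exact h1
      · have h3 := hw.monotone (Fin.castSucc_le_castSucc_iff.2 hj)
        have h4 := hw (Fin.succ_lt_succ_iff.2 (not_le.1 hj'))
        omega
      · exact absurd (h.le.trans hj') hj
      · have h3 := hw (Fin.succ_lt_succ_iff.2 (not_le.1 hj))
        omega
    · dsimp only
      rw [if_pos hzero]
      exact h0
    · dsimp only
      rw [if_pos hzero]
      exact hwb⟩
  left_inv x := by
    obtain ⟨⟨m, v, b⟩, hm, hv, h0, hb, hvb⟩ := x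
    have hmc : shiftCol c m v c.succ - shiftCol c m v c.castSucc = m := by
      rw [shiftCol_succ_of_le le_rfl, shiftCol_castSucc_of_le le_rfl, Nat.add_sub_cancel]
    refine Subtype.ext (Prod.ext hmc (Prod.ext (funext fun j => ?_) rfl))
    dsimp only
    rw [hmc]
    split_ifs with hj
    · exact shiftCol_castSucc_of_le hj m v
    · rw [shiftCol_succ_of_le (not_le.1 hj).le, Nat.add_sub_cancel_left]
  right_inv y := by
    obtain ⟨⟨w, b⟩, hw, h0, hb, hwb⟩ := y
    dsimp only at hw
    refine Subtype.ext (Prod.ext (funext fun a => ?_) rfl)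
    have hc : w c.castSucc < w c.succ := hw Fin.castSucc_lt_succ
    by_cases ha : a.val ≤ c.val
    · obtain ⟨j, rfl⟩ : ∃ j : Fin r, j.castSucc = a := ⟨⟨a.val, by omega⟩, rfl⟩
      have hj : j ≤ c := ha
      dsimp only
      rw [shiftCol_castSucc_of_le hj, if_pos hj]
    · obtain ⟨j, rfl⟩ : ∃ j : Fin r, j.succ = a :=
        ⟨⟨a.val - 1, by omega⟩, Fin.ext (by simp; omega)⟩
      have hj : c ≤ j := Fin.le_def.2 (by simp at ha; omega)
      dsimp only
      rw [shiftCol_succ_of_le hj]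
      split_ifs with hj'
      · rw [le_antisymm hj' hj]
        omega
      · have := hw.monotone (Fin.succ_le_succ_iff.2 hj)
        omega

/-- The summand of `hookVal` transported along `shiftEquiv`. -/
noncomputable def shiftTerm {n r : ℕ} (kc kr : ℕ → ℕ) (c : Fin r) (p m : ℕ) (v : Fin r → ℕ)
    (b : Fin n → ℕ) : ℝ :=
  rowWt n kr b * (∏ a, (shiftCol c m v a : ℝ) ^ (splitExp kc (c.val + 1) p (a.val + 1)))⁻¹

/-- The summand of `efOne` with the first `i` column entries left unshifted. -/
noncomputable def partialShiftTerm {n r : ℕ} (kc kr : ℕ → ℕ) (i m : ℕ) (v : Fin r → ℕ)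
    (b : Fin n → ℕ) : ℝ :=
  (m : ℝ)⁻¹ * rowWt n kr b
    * ∏ a : Fin r, (((if a.val < i then v a else m + v a : ℕ) : ℝ) ^ (kc (a.val + 1)))⁻¹

theorem shiftTerm_eq {n r : ℕ} (kc kr : ℕ → ℕ) (c : Fin r) (p m : ℕ) (v : Fin r → ℕ)
    (b : Fin n → ℕ) :
    shiftTerm kc kr c p m v b = rowWt n kr b
      * ((v c : ℝ) ^ p)⁻¹ * (((m + v c : ℕ) : ℝ) ^ (1 + kc (c.val + 1) - p))⁻¹
      * ∏ a ∈ Finset.univ.erase c,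
          (((if a.val < c.val then v a else m + v a : ℕ) : ℝ) ^ (kc (a.val + 1)))⁻¹ := by
  rw [shiftTerm, ← Finset.prod_inv_distrib, Fin.prod_univ_succAbove _ c.castSucc,
    ← Finset.mul_prod_erase _ _ (Finset.mem_univ c)]
  rw [Fin.succAbove_castSucc_self, shiftCol_castSucc_of_le le_rfl, shiftCol_succ_of_le le_rfl]
  have hrest : ∀ a ∈ Finset.univ.erase c,
      ((shiftCol c m v (c.castSucc.succAbove a) : ℝ)
        ^ splitExp kc (c.val + 1) p ((c.castSucc.succAbove a).val + 1))⁻¹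
      = (((if a.val < c.val then v a else m + v a : ℕ) : ℝ) ^ (kc (a.val + 1)))⁻¹ := by
    intro a ha
    rcases lt_or_gt_of_ne (Finset.ne_of_mem_erase ha) with h | h
    · have h' : a.val < c.val := h
      rw [Fin.succAbove_of_castSucc_lt _ _ (Fin.castSucc_lt_castSucc_iff.2 h),
        shiftCol_castSucc_of_le h.le, if_pos h']
      simp [splitExp, h']
    · have h' : c.val < a.val := h
      rw [Fin.succAbove_of_le_castSucc _ _ (Fin.castSucc_le_castSucc_iff.2 h.le),
        shiftCol_succ_of_le h.le, if_neg h'.not_gt]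
      simp [splitExp, show ¬ a.val + 1 < c.val by omega, show a.val + 1 ≠ c.val by omega,
        show a.val ≠ c.val by omega]
  rw [Finset.prod_congr rfl hrest]
  simp [splitExp]
  ring

theorem partialShiftTerm_add_sum_shiftTerm {n r : ℕ} (kc kr : ℕ → ℕ) (c : Fin r) {m : ℕ}
    {v : Fin r → ℕ} (b : Fin n → ℕ) (hm : 0 < m) (hv : 0 < v c) :
    partialShiftTerm kc kr c.val m v b
        + ∑ p ∈ Finset.Icc 1 (kc (c.val + 1)), shiftTerm kc kr c p m v b
      = partialShiftTerm kc kr (c.val + 1) m v b := by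
  have hpf := inv_mul_inv_pow_add_sum_eq (m := (m : ℝ)) (v := (v c : ℝ)) (by exact_mod_cast hm)
    (by exact_mod_cast hv) (kc (c.val + 1))
  have hrest : ∀ a ∈ Finset.univ.erase c,
      (((if a.val < c.val + 1 then v a else m + v a : ℕ) : ℝ) ^ (kc (a.val + 1)))⁻¹
      = (((if a.val < c.val then v a else m + v a : ℕ) : ℝ) ^ (kc (a.val + 1)))⁻¹ := by
    intro a ha
    have hne : a.val ≠ c.val := fun h => Finset.ne_of_mem_erase ha (Fin.ext h)
    simp only [show a.val < c.val + 1 ↔ a.val < c.val by omega]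
  simp only [shiftTerm_eq, partialShiftTerm]
  rw [← Finset.mul_prod_erase _ _ (Finset.mem_univ c),
    ← Finset.mul_prod_erase _
      (fun a : Fin r =>
        (((if a.val < c.val + 1 then v a else m + v a : ℕ) : ℝ) ^ (kc (a.val + 1)))⁻¹)
      (Finset.mem_univ c), Finset.prod_congr rfl hrest, ← Finset.sum_mul]
  simp only [mul_assoc (rowWt n kr b), ← Finset.mul_sum, if_neg (lt_irrefl _),
    if_pos (Nat.lt_succ_self _), Nat.cast_add]
  linear_combination (rowWt n kr b * ∏ a ∈ Finset.univ.erase c,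
    (((if a.val < c.val then v a else m + v a : ℕ) : ℝ) ^ (kc (a.val + 1)))⁻¹) * hpf

/-- Only the last column position loses a term to the condition `ℓ_{r+1} ≥ 2`. -/
theorem sum_filter_shiftTerm {n r : ℕ} (kc kr : ℕ → ℕ) (hkcr : 2 ≤ kc r) (c : Fin r) {m : ℕ}
    {v : Fin r → ℕ} (b : Fin n → ℕ) (hm : 0 < m) (hv : 0 < v c) :
    ∑ p ∈ (Finset.Icc 1 (kc (c.val + 1))).filter
        (fun p => 2 ≤ splitExp kc (c.val + 1) p (r + 1)), shiftTerm kc kr c p m v b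
      = partialShiftTerm kc kr (c.val + 1) m v b - partialShiftTerm kc kr c.val m v b
        - if c.val + 1 = r then rowWt n kr b * (∏ i, ((v i : ℝ)) ^ (kc (i.val + 1)))⁻¹
            * ((m : ℝ) + v c)⁻¹ else 0 := by
  rw [← partialShiftTerm_add_sum_shiftTerm kc kr c b hm hv, add_sub_cancel_left]
  split_ifs with hc
  · have hfilter : (Finset.Icc 1 (kc (c.val + 1))).filter
        (fun p => 2 ≤ splitExp kc (c.val + 1) p (r + 1))
        = (Finset.Icc 1 (kc (c.val + 1))).erase (kc (c.val + 1)) := by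
      ext p
      simp only [Finset.mem_filter, Finset.mem_erase, Finset.mem_Icc, splitExp, hc]
      simp
      omega
    rw [hfilter, Finset.sum_erase_eq_sub (Finset.mem_Icc.2 ⟨by rw [hc]; omega, le_rfl⟩)]
    congr 1
    rw [shiftTerm_eq, ← Finset.prod_inv_distrib, ← Finset.mul_prod_erase _ _ (Finset.mem_univ c)]
    have hrest : ∀ a ∈ Finset.univ.erase c,
        (((if a.val < c.val then v a else m + v a : ℕ) : ℝ) ^ (kc (a.val + 1)))⁻¹
        = ((v a : ℝ) ^ (kc (a.val + 1)))⁻¹ := by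
      intro a ha
      have hne : a.val ≠ c.val := fun h => Finset.ne_of_mem_erase ha (Fin.ext h)
      rw [if_pos (by omega)]
    rw [Finset.prod_congr rfl hrest, Nat.add_sub_cancel, pow_one, Nat.cast_add]
    ring
  · rw [sub_zero, Finset.filter_true_of_mem]
    intro p _
    simpa [splitExp, show ¬ r < c.val by omega, show r ≠ c.val by omega,
      show r ≠ c.val + 1 by omega, show ¬ r + 1 < c.val + 1 by omega] using hkcr

theorem efOne_term_add_sum {n r : ℕ} (hr : 0 < r) (kc kr : ℕ → ℕ) (hkcr : 2 ≤ kc r)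
    {m : ℕ} {v : Fin r → ℕ} (b : Fin n → ℕ) (hm : 0 < m) (hv : ∀ i, 0 < v i) :
    (m : ℝ)⁻¹ * rowWt n kr b * (∏ i, (((m + v i : ℕ) : ℝ)) ^ (kc (i.val + 1)))⁻¹
      + ∑ c : Fin r, ∑ p ∈ (Finset.Icc 1 (kc (c.val + 1))).filter
          (fun p => 2 ≤ splitExp kc (c.val + 1) p (r + 1)), shiftTerm kc kr c p m v b
      = rowWt n kr b * (∏ i, ((v i : ℝ)) ^ (kc (i.val + 1)))⁻¹
        * ((m : ℝ)⁻¹ - ((m : ℝ) + v ⟨r - 1, by omega⟩)⁻¹) := by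
  have hlast : ∀ c : Fin r, c.val + 1 = r ↔ c = ⟨r - 1, by omega⟩ := fun c => by
    rw [Fin.ext_iff]
    simp only
    omega
  rw [Finset.sum_congr rfl fun c _ => sum_filter_shiftTerm kc kr hkcr c b hm (hv c),
    Finset.sum_sub_distrib, Fin.sum_univ_eq_sum_range
      (fun i => partialShiftTerm kc kr (i + 1) m v b - partialShiftTerm kc kr i m v b),
    Finset.sum_range_sub (fun i => partialShiftTerm kc kr i m v b)]
  simp only [hlast, Finset.sum_ite_eq', Finset.mem_univ, if_true]
  simp only [partialShiftTerm, Fin.is_lt, if_true, Nat.not_lt_zero, if_false,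
    Finset.prod_inv_distrib]
  ring

/-- Decomposition of the elementary factorial value with one extra exponent-1 variable:
`ζ_{λ,1}(𝐤,(1)) = ζ_skew − Σ_{i=1}^{r} Σ_{ℓ_i+ℓ_{i+1}=1+k_{i1}, ℓ_i,ℓ_{i+1}≥1, ℓ_{r+1}≥2}`
`ζ_{(λ₁,1^r)}(column (ℓ₁,…,ℓ_{r+1}), row 𝐤)`. -/
theorem efOne_skew_decomposition (n r : ℕ) (hr : 0 < r) (kc kr : ℕ → ℕ)
    (hkc : ∀ i, 1 ≤ i → i ≤ r → 1 ≤ kc i) (hkcr : 2 ≤ kc r)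
    (hkr : ∀ j, 2 ≤ j → j ≤ n + 1 → 1 ≤ kr j) (hkrl : 0 < n → 2 ≤ kr (n + 1)) :
    efOne n r hr kc kr =
      skewOne n r hr kc kr
        - ∑ i ∈ Finset.Icc 1 r,
            ∑ p ∈ (Finset.Icc 1 (kc i)).filter (fun p => 2 ≤ splitExp kc i p (r + 1)),
              hookVal n r (splitExp kc i p) kr := by
  let s : Fin r → Finset ℕ := fun c => (Finset.Icc 1 (kc (c.val + 1))).filter
    fun p => 2 ≤ splitExp kc (c.val + 1) p (r + 1)
  let F : EfFilling n r hr → ℝ := fun x =>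
    (x.1.1 : ℝ)⁻¹ * rowWt n kr x.1.2.2
      * (∏ i, (((x.1.1 + x.1.2.1 i : ℕ) : ℝ)) ^ (kc (i.val + 1)))⁻¹
  let H : Fin r → ℕ → EfFilling n r hr → ℝ := fun c p x =>
    shiftTerm kc kr c p x.1.1 x.1.2.1 x.1.2.2
  have hF : ∀ x, 0 ≤ F x := fun x =>
    mul_nonneg (mul_nonneg (by positivity) (rowWt_nonneg _ _ _)) (by positivity)
  have hH : ∀ c p x, 0 ≤ H c p x := fun c p x => mul_nonneg (rowWt_nonneg _ _ _) (by positivity)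
  have htot : HasSum (fun x => F x + ∑ c, ∑ p ∈ s c, H c p x) (skewOne n r hr kc kr) := by
    convert hasSum_harmonic_eq_skewOne n r hr kc kr hkc hkcr hkr hkrl using 2 with x
    exact efOne_term_add_sum hr kc kr hkcr x.1.2.2 x.2.1
      (pos_of_strictMono hr x.2.2.1 x.2.2.2.1)
  have hHsum : ∀ c, ∀ p ∈ s c, Summable (H c p) := fun c p hp =>
    htot.summable.of_nonneg_of_le (hH c p) fun x =>
      calc H c p x ≤ ∑ p ∈ s c, H c p x := Finset.single_le_sum (fun p _ => hH c p x) hp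
        _ ≤ ∑ c, ∑ p ∈ s c, H c p x :=
          Finset.single_le_sum (f := fun c => ∑ p ∈ s c, H c p x)
            (fun c _ => Finset.sum_nonneg fun p _ => hH c p x) (Finset.mem_univ c)
        _ ≤ F x + ∑ c, ∑ p ∈ s c, H c p x := le_add_of_nonneg_left (hF x)
  have hHval : ∀ c p, ∑' x, H c p x = hookVal n r (splitExp kc (c.val + 1) p) kr := fun c p =>
    (shiftEquiv n r hr c).tsum_eq fun y =>
      rowWt n kr y.1.2 * (∏ a, ((y.1.1 a : ℝ)) ^ (splitExp kc (c.val + 1) p (a.val + 1)))⁻¹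
  have hFsum : Summable F := htot.summable.of_nonneg_of_le hF fun x =>
    le_add_of_nonneg_right (Finset.sum_nonneg fun c _ => Finset.sum_nonneg fun p _ => hH c p x)
  have hhook : HasSum (fun x => ∑ c, ∑ p ∈ s c, H c p x)
      (∑ c : Fin r, ∑ p ∈ s c, hookVal n r (splitExp kc (c.val + 1) p) kr) :=
    hasSum_sum fun c _ => hasSum_sum fun p hp => hHval c p ▸ (hHsum c p hp).hasSum
  have hIcc : ∀ f : ℕ → ℝ, ∑ i ∈ Finset.Icc 1 r, f i = ∑ c : Fin r, f (c.val + 1) := fun f => by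
    rw [Fin.sum_univ_eq_sum_range (fun c => f (c + 1)), Finset.range_eq_Ico,
      Finset.sum_Ico_add' f 0 r 1]
    rfl
  rw [hIcc]
  exact eq_sub_of_add_eq ((hFsum.hasSum.add hhook).unique htot)
end
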